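/- Let (X,T) be a distal minimal topological dynamical system, let x0 ∈ X, and let K be the closure in X⁶ of the set {(T^m x0, T^n x0, T^{m+n} x0, T^p x0, T^{p+m} x0, T^{p+n} x0) : m,n,p ∈ ℤ}. Suppose (x1,x2,x3,x4,x5,x6) ∈ K and x'_6 ∈ X is such that (x6,x'_6) ∈ RP. Then (x1,x2,x3,x4,x5,x'_6) ∈ K. -/

import Mathlib

open Filter Topology

/-- The `n`-th iterate (`n : ℤ`) of a homeomorphism `T : X → X`. -/
def iterZ {X : Type*} [TopologicalSpace X] (T : X ≃ₜ X) (n : ℤ) : X → X :=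
  fun x => (T.toEquiv ^ n) x

section Defs

variable {X : Type*} [TopologicalSpace X]

/-- The set of parallelograms `𝒫`: the closure in `X⁴` of
`{(x, Tᵐx, Tⁿx, Tᵐ⁺ⁿx) : x ∈ X, m, n ∈ ℤ}`. -/
def Para (T : X ≃ₜ X) : Set (X × X × X × X) :=
  closure {q | ∃ (x : X) (m n : ℤ),
    q = (x, iterZ T m x, iterZ T n x, iterZ T (m + n) x)}

/-- The set of parallelepipeds `𝒬`: the closure in `X⁸ = X⁴ × X⁴` of
`{(x, Tᵐx, Tⁿx, Tᵐ⁺ⁿx, Tᵖx, Tᵐ⁺ᵖx, Tⁿ⁺ᵖx, Tᵐ⁺ⁿ⁺ᵖx) : x ∈ X, m, n, p ∈ ℤ}`. -/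
def Pip (T : X ≃ₜ X) : Set ((X × X × X × X) × (X × X × X × X)) :=
  closure {q | ∃ (x : X) (m n p : ℤ),
    q = ((x, iterZ T m x, iterZ T n x, iterZ T (m + n) x),
         (iterZ T p x, iterZ T (m + p) x, iterZ T (n + p) x, iterZ T (m + n + p) x))}

end Defs

section MetricDefs

variable {X : Type*} [MetricSpace X]

/-- `(X, T)` is transitive: some point has dense orbit `{Tⁿx : n ∈ ℤ}`. -/
def IsTransitive (T : X ≃ₜ X) : Prop :=
  ∃ x : X, Dense (Set.range fun n : ℤ => iterZ T n x)

/-- `(X, T)` is minimal: every point has dense orbit. -/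
def IsMinimal (T : X ≃ₜ X) : Prop :=
  ∀ x : X, Dense (Set.range fun n : ℤ => iterZ T n x)

/-- `(x, y)` is a proximal pair: `inf_{n ∈ ℤ} d(Tⁿx, Tⁿy) = 0`. -/
def ProximalPair (T : X ≃ₜ X) (x y : X) : Prop :=
  ⨅ n : ℤ, dist (iterZ T n x) (iterZ T n y) = 0

/-- `(X, T)` is distal: every pair of distinct points is distal,
i.e. `inf_{n ∈ ℤ} d(Tⁿx, Tⁿy) > 0`. -/
def IsDistal (T : X ≃ₜ X) : Prop :=
  ∀ x y : X, x ≠ y → 0 < ⨅ n : ℤ, dist (iterZ T n x) (iterZ T n y)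

/-- The regionally proximal relation `RP`. -/
def RP (T : X ≃ₜ X) (x y : X) : Prop :=
  ∀ ε > 0, ∃ x' y' : X, ∃ n : ℤ,
    dist x' x < ε ∧ dist y' y < ε ∧ dist (iterZ T n x') (iterZ T n y') < ε

/-- The doubly regionally proximal relation `RP²`. -/
def RP2 (T : X ≃ₜ X) (x y : X) : Prop :=
  ∀ ε > 0, ∃ x' y' : X, ∃ m n : ℤ,
    dist x' x < ε ∧ dist y' y < ε ∧
    dist (iterZ T m x') (iterZ T m y') < ε ∧
    dist (iterZ T n x') (iterZ T n y') < ε ∧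
    dist (iterZ T (m + n) x') (iterZ T (m + n) y') < ε

/-- The strongly doubly regionally proximal relation `RP²ₛ`. -/
def RP2S (T : X ≃ₜ X) (x y : X) : Prop :=
  ∀ ε > 0, ∃ x' y' : X, ∃ m n : ℤ,
    dist x' x < ε ∧ dist y' y < ε ∧
    dist (iterZ T m x') y < ε ∧ dist (iterZ T n x') y < ε ∧
    dist (iterZ T (m + n) x') y < ε ∧
    dist (iterZ T m y') y < ε ∧ dist (iterZ T n y') y < ε ∧
    dist (iterZ T (m + n) y') y < ε

end MetricDefs

/-!
The closure of a group of coordinatewise iterates acting on a power of a distal system is itself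
a group (Ellis): its elements are injective, so its only idempotent is the identity. The points
of `K` are therefore the points `s · (x0, …, x0)` with `s` in such a group.

In a minimal system, `(x, y) ∈ RP` says that `(x, x, x, y)` is a limit of parallelograms. For
residually many `x` the first vertex of the approximating parallelograms can be kept equal to
`x`, by Baire category. The commutator of two faces moves a single vertex, so the group of
parallelograms with fixed first vertex is stable under conjugation by the Ellis group, which
carries this conclusion to every `x`.

If `s · (x0, …, x0) = (x1, …, x6)`, apply this to `x0` and `y = s₆⁻¹ x6'`, which are regionally
proximal. As `(a, b, a + b)` embeds into the exponents of `K` as `(0, a, a, b, b, a + b)`, the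
resulting limit of parallelograms yields `(x0, …, x0, y)` as a point of `K`, and `s` maps it to
`(x1, …, x5, x6')`.
-/

open scoped commutatorElement

lemma commutatorElement_mem {G : Type*} [Group G] {H : Subgroup G} {g h : G} (hg : g ∈ H)
    (hh : h ∈ H) : ⁅g, h⁆ ∈ H :=
  H.commutator_le_self (Subgroup.commutator_mem_commutator hg hh)

section Iterates

variable {X : Type*} [TopologicalSpace X] (T : X ≃ₜ X)

lemma iterZ_zero (x : X) : iterZ T 0 x = x := rfl

lemma iterZ_add (m n : ℤ) (x : X) : iterZ T (m + n) x = iterZ T m (iterZ T n x) := by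
  simp only [iterZ, zpow_add, Equiv.Perm.mul_apply]

lemma iterZ_eq_coe_zpow (n : ℤ) : iterZ T n = ⇑(T ^ n) := by
  let toPerm : (X ≃ₜ X) →* Equiv.Perm X := .mk' Homeomorph.toEquiv fun _ _ => rfl
  exact congrArg DFunLike.coe (map_zpow toPerm T n).symm

@[fun_prop]
lemma continuous_iterZ (n : ℤ) : Continuous (iterZ T n) := by
  rw [iterZ_eq_coe_zpow]
  exact (T ^ n).continuous

end Iterates

lemma eventually_residual_mem_closure_range {X Y Λ : Type*} [TopologicalSpace X]
    [TopologicalSpace Y] [SecondCountableTopology Y] {φ : Λ → X → Y}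
    (hφ : ∀ l, Continuous (φ l)) :
    ∀ᶠ x in residual X, ∀ y, (x, y) ∈ closure {q : X × Y | ∃ l, φ l q.1 = q.2} →
      y ∈ closure (Set.range fun l => φ l x) := by
  let B := TopologicalSpace.countableBasis Y
  let hitting : Set Y → Set X := fun U => ⋃ l, φ l ⁻¹' U
  have hopen : ∀ U ∈ B, IsOpen (hitting U) := fun U hU =>
    isOpen_iUnion fun l => (TopologicalSpace.isOpen_of_mem_countableBasis hU).preimage (hφ l)
  -- The open set `hitting U` differs from its closure by a nowhere dense set.
  have hresidual : ∀ᶠ x in residual X, ∀ U ∈ B, x ∈ closure (hitting U) → x ∈ hitting U :=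
    (eventually_countable_ball (TopologicalSpace.countable_countableBasis Y)).2 fun U hU =>
      (closure_residualEq (hopen U hU).isLocallyClosed).mem_iff.mono fun _ => Iff.mp
  filter_upwards [hresidual] with x hx y hxy
  refine (TopologicalSpace.isBasis_countableBasis Y).mem_closure_iff.2 fun U hU hyU => ?_
  have hxU : x ∈ closure (hitting U) := by
    refine mem_closure_iff.2 fun V hV hxV => ?_
    obtain ⟨⟨x', _⟩, ⟨hx'V, hy'U⟩, l, rfl : φ l x' = _⟩ := mem_closure_iff.1 hxy (V ×ˢ U)
      (hV.prod (TopologicalSpace.isOpen_of_mem_countableBasis hU)) ⟨hxV, hyU⟩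
    exact ⟨x', hx'V, Set.mem_iUnion.2 ⟨l, hy'U⟩⟩
  obtain ⟨l, hl⟩ := Set.mem_iUnion.1 (hx U hU hxU)
  exact ⟨φ l x, hl, l, rfl⟩

section RightTopologicalMonoid

variable {M : Type*} [TopologicalSpace M]

lemma mul_mem_closure_of_continuous [Mul M] (hright : ∀ r : M, Continuous (· * r)) {S : Set M}
    (hleft : ∀ a ∈ S, Continuous (a * ·)) (hmul : ∀ a ∈ S, ∀ b ∈ S, a * b ∈ S) {p q : M}
    (hp : p ∈ closure S) (hq : q ∈ closure S) : p * q ∈ closure S := by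
  have hleft_mem : ∀ a ∈ S, a * q ∈ closure S := fun a ha =>
    map_mem_closure (hleft a ha) hq (hmul a ha)
  simpa only [closure_closure] using map_mem_closure (hright q) hp hleft_mem

variable [Monoid M] [T2Space M] (hright : ∀ r : M, Continuous (· * r)) {S : Submonoid M}
  (hS : IsCompact (S : Set M)) (hidem : ∀ u ∈ S, u * u = u → u = 1)
include hright hS hidem

lemma exists_left_inverse_of_isCompact {p : M} (hp : p ∈ S) : ∃ q ∈ S, q * p = 1 := by
  have hmul : ∀ᵉ (x ∈ (· * p) '' (S : Set M)) (y ∈ (· * p) '' (S : Set M)),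
      x * y ∈ (· * p) '' (S : Set M) := by
    rintro _ ⟨a, ha, rfl⟩ _ ⟨b, hb, rfl⟩
    exact ⟨a * p * b, S.mul_mem (S.mul_mem ha hp) hb, mul_assoc _ _ _⟩
  obtain ⟨_, ⟨q, hq, rfl⟩, hqp⟩ := exists_idempotent_in_compact_subsemigroup hright
    ((· * p) '' (S : Set M)) ⟨_, p, hp, rfl⟩ (hS.image (hright p)) hmul
  exact ⟨q, hq, hidem _ (S.mul_mem hq hp) hqp⟩

lemma exists_inverse_of_isCompact {p : M} (hp : p ∈ S) : ∃ q ∈ S, q * p = 1 ∧ p * q = 1 := by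
  obtain ⟨q, hq, hqp⟩ := exists_left_inverse_of_isCompact hright hS hidem hp
  obtain ⟨r, -, hrq⟩ := exists_left_inverse_of_isCompact hright hS hidem hq
  exact ⟨q, hq, hqp, left_inv_eq_right_inv hrq hqp ▸ hrq⟩

end RightTopologicalMonoid

section EnvelopingMonoid

/-- The topology of pointwise convergence on self-maps, the one in which enveloping semigroups
are formed. -/
local instance {X : Type*} [TopologicalSpace X] : TopologicalSpace (Function.End X) :=
  inferInstanceAs (TopologicalSpace (X → X))

local instance {X : Type*} [TopologicalSpace X] [T2Space X] : T2Space (Function.End X) :=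
  inferInstanceAs (T2Space (X → X))

local instance {X : Type*} [TopologicalSpace X] [CompactSpace X] :
    CompactSpace (Function.End X) :=
  inferInstanceAs (CompactSpace (X → X))

variable {ι κ X : Type*}

section Topological

variable [TopologicalSpace X]

lemma continuous_end_eval (i : ι) (x : X) :
    Continuous fun p : ι → Function.End X => p i x :=
  (continuous_apply x).comp (continuous_apply (A := fun _ => X → X) i)

lemma continuous_end_mul_right (r : ι → Function.End X) : Continuous (· * r) :=
  continuous_pi fun i => continuous_pi fun x => continuous_end_eval i (r i x)

lemma continuous_end_mul_left {a : ι → Function.End X} (ha : ∀ i, Continuous (a i)) :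
    Continuous (a * ·) :=
  continuous_pi fun i => continuous_pi fun x => (ha i).comp (continuous_end_eval i x)

/-- The family of iterates `(T ^ l i)ᵢ` attached to a vector of exponents `l ∈ L`. -/
def iterates (T : X ≃ₜ X) (L : AddSubgroup (ι → ℤ)) (l : L) : ι → Function.End X :=
  fun i => iterZ T (l.1 i)

/-- The enveloping semigroup of the action of `L` on `ι → X` in which `l` acts on the `i`-th
coordinate by `T ^ l i`. Its elements act coordinatewise, so it is encoded as a family of
self-maps of `X` instead of a self-map of `ι → X`. -/
def envelopingMonoid (T : X ≃ₜ X) (L : AddSubgroup (ι → ℤ)) :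
    Submonoid (ι → Function.End X) where
  carrier := closure (Set.range (iterates T L))
  one_mem' := subset_closure ⟨0, rfl⟩
  mul_mem' hp hq := by
    refine mul_mem_closure_of_continuous continuous_end_mul_right ?_ ?_ hp hq
    · rintro _ ⟨l, rfl⟩
      exact continuous_end_mul_left fun i => continuous_iterZ T (l.1 i)
    · rintro _ ⟨l, rfl⟩ _ ⟨l', rfl⟩
      exact ⟨l + l', funext fun i => funext fun x => iterZ_add T _ _ x⟩

/-- The closure of the orbit of `z` under the action of `L` on `ι → X` in which `l` acts on the
`i`-th coordinate by `T ^ l i`. -/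
def orbitClosure (T : X ≃ₜ X) (L : AddSubgroup (ι → ℤ)) (z : ι → X) : Set (ι → X) :=
  closure (Set.range fun (l : L) i => iterZ T (l.1 i) (z i))

lemma continuous_end_apply (z : ι → X) :
    Continuous fun (p : ι → Function.End X) i => p i (z i) :=
  continuous_pi fun i => continuous_end_eval i (z i)

lemma image_envelopingMonoid [CompactSpace X] [T2Space X] (T : X ≃ₜ X)
    (L : AddSubgroup (ι → ℤ)) (z : ι → X) :
    (fun p i => p i (z i)) '' (envelopingMonoid T L : Set (ι → Function.End X)) =
      orbitClosure T L z := by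
  change _ '' closure _ = _
  rw [← (continuous_end_apply z).isClosedMap.closure_image_eq_of_continuous
    (continuous_end_apply z), ← Set.range_comp]
  rfl

lemma reindex_mem_envelopingMonoid {T : X ≃ₜ X} {L : AddSubgroup (ι → ℤ)}
    {L' : AddSubgroup (κ → ℤ)} (σ : κ → Option ι)
    (hσ : ∀ l ∈ L, (fun k => (σ k).elim 0 l) ∈ L') {p : ι → Function.End X}
    (hp : p ∈ envelopingMonoid T L) :
    (fun k => (σ k).elim 1 p) ∈ envelopingMonoid T L' := by
  have hcont : Continuous fun (p : ι → Function.End X) k => (σ k).elim 1 p := by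
    refine continuous_pi fun k => ?_
    cases σ k with
    | none => exact continuous_const
    | some i => exact continuous_apply i
  refine map_mem_closure hcont hp ?_
  rintro _ ⟨l, rfl⟩
  refine ⟨⟨_, hσ l l.2⟩, funext fun k => ?_⟩
  cases hk : σ k with
  | none => simp only [iterates, hk, Option.elim]; rfl
  | some i => simp only [iterates, hk, Option.elim]; rfl

end Topological

variable [MetricSpace X] {T : X ≃ₜ X} {L : AddSubgroup (ι → ℤ)}

lemma IsDistal.injective_of_mem_envelopingMonoid (hd : IsDistal T) {p : ι → Function.End X}
    (hp : p ∈ envelopingMonoid T L) (i : ι) : Function.Injective (p i) := by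
  intro x y hxy
  by_contra hne
  have hbdd : BddBelow (Set.range fun n : ℤ => dist (iterZ T n x) (iterZ T n y)) :=
    ⟨0, Set.forall_mem_range.2 fun _ => dist_nonneg⟩
  have hclosed : IsClosed {f : ι → Function.End X |
      ⨅ n : ℤ, dist (iterZ T n x) (iterZ T n y) ≤ dist (f i x) (f i y)} :=
    isClosed_le continuous_const ((continuous_end_eval i x).dist (continuous_end_eval i y))
  have hle : ⨅ n : ℤ, dist (iterZ T n x) (iterZ T n y) ≤ dist (p i x) (p i y) := by
    refine hclosed.closure_subset_iff.2 ?_ hp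
    rintro _ ⟨l, rfl⟩
    exact ciInf_le hbdd (l.1 i)
  rw [hxy, dist_self] at hle
  exact (hd x y hne).not_ge hle

variable [CompactSpace X]

lemma IsDistal.exists_inverse_mem_envelopingMonoid (hd : IsDistal T) {p : ι → Function.End X}
    (hp : p ∈ envelopingMonoid T L) : ∃ q ∈ envelopingMonoid T L, q * p = 1 ∧ p * q = 1 :=
  exists_inverse_of_isCompact continuous_end_mul_right isClosed_closure.isCompact
    (fun _ hu hidem => funext fun i => funext fun x =>
      hd.injective_of_mem_envelopingMonoid hu i (congrFun (congrFun hidem i) x)) hp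

/-- The enveloping group of a distal system: the enveloping semigroup `envelopingMonoid T L`,
seen as a group of families of permutations. -/
def envelopingGroup (hd : IsDistal T) (L : AddSubgroup (ι → ℤ)) :
    Subgroup (ι → Equiv.Perm X) where
  carrier := {s | (fun i => ⇑(s i)) ∈ envelopingMonoid T L}
  one_mem' := (envelopingMonoid T L).one_mem
  mul_mem' hs ht := (envelopingMonoid T L).mul_mem hs ht
  inv_mem' {s} hs := by
    obtain ⟨q, hq, -, hsq⟩ := hd.exists_inverse_mem_envelopingMonoid hs
    have hinv : (fun i => ⇑(s i)⁻¹) = q := funext fun i => funext fun x =>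
      Equiv.Perm.inv_eq_iff_eq.2 (congrFun (congrFun hsq i) x).symm
    rwa [← hinv] at hq

lemma mem_envelopingGroup {hd : IsDistal T} {s : ι → Equiv.Perm X} :
    s ∈ envelopingGroup hd L ↔ (fun i => ⇑(s i)) ∈ envelopingMonoid T L := Iff.rfl

lemma mem_orbitClosure_iff (hd : IsDistal T) {z w : ι → X} :
    w ∈ orbitClosure T L z ↔ ∃ s ∈ envelopingGroup hd L, ∀ i, s i (z i) = w i := by
  rw [← image_envelopingMonoid]
  constructor
  · rintro ⟨p, hp, rfl⟩
    obtain ⟨q, -, hqp, hpq⟩ := hd.exists_inverse_mem_envelopingMonoid hp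
    exact ⟨fun i => ⟨p i, q i, congrFun (congrFun hqp i), congrFun (congrFun hpq i)⟩, hp,
      fun _ => rfl⟩
  · rintro ⟨s, hs, hsz⟩
    exact ⟨_, hs, funext hsz⟩

lemma reindex_mem_envelopingGroup {hd : IsDistal T} {L' : AddSubgroup (κ → ℤ)}
    (σ : κ → Option ι) (hσ : ∀ l ∈ L, (fun k => (σ k).elim 0 l) ∈ L')
    {s : ι → Equiv.Perm X} (hs : s ∈ envelopingGroup hd L) :
    (fun k => (σ k).elim 1 s) ∈ envelopingGroup hd L' := by
  have hcoe : (fun k => ⇑((σ k).elim 1 s)) =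
      fun k => (σ k).elim (1 : Function.End X) fun i => ⇑(s i) :=
    funext fun k => by cases σ k <;> rfl
  rw [mem_envelopingGroup, hcoe]
  exact reindex_mem_envelopingMonoid σ hσ hs

/-- The enveloping group of `(X, T)` itself, that is, of the action of `ℤ` on a single
coordinate. -/
def ellisGroup (hd : IsDistal T) : Subgroup (Equiv.Perm X) :=
  (envelopingGroup hd (⊤ : AddSubgroup (Unit → ℤ))).comap (Pi.constMonoidHom Unit _)

lemma apply_mem_ellisGroup {hd : IsDistal T} {s : ι → Equiv.Perm X}
    (hs : s ∈ envelopingGroup hd L) (i : ι) : s i ∈ ellisGroup hd :=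
  reindex_mem_envelopingGroup (fun _ : Unit => some i) (fun _ _ => AddSubgroup.mem_top _) hs

lemma exists_mem_ellisGroup_apply_eq (hd : IsDistal T) (hmin : IsMinimal T) (x y : X) :
    ∃ u ∈ ellisGroup hd, u x = y := by
  have hy : (fun _ : Unit => y) ∈ orbitClosure T ⊤ (fun _ => x) := by
    refine map_mem_closure (f := fun (a : X) (_ : Unit) => a) (by fun_prop) (hmin x y) ?_
    rintro _ ⟨n, rfl⟩
    exact ⟨⟨fun _ => n, trivial⟩, rfl⟩
  obtain ⟨s, hs, hsx⟩ := (mem_orbitClosure_iff hd).1 hy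
  exact ⟨s (), apply_mem_ellisGroup hs (), hsx ()⟩

lemma coe_mem_closure_range_iterZ {hd : IsDistal T} {u : Equiv.Perm X}
    (hu : u ∈ ellisGroup hd) : ⇑u ∈ closure (Set.range (iterZ T)) := by
  refine map_mem_closure (f := fun p : Unit → Function.End X => p ()) (continuous_apply ()) hu ?_
  rintro _ ⟨l, rfl⟩
  exact ⟨l.1 (), rfl⟩

end EnvelopingMonoid

section Parallelograms

/-- The vectors `(m, n, m + n)`: the exponents of the last three vertices of a parallelogram
with fixed first vertex. -/
def paraExponents : AddSubgroup (Fin 3 → ℤ) where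
  carrier := {l | l 2 = l 0 + l 1}
  zero_mem' := rfl
  add_mem' {a b} ha hb := by
    simp only [Set.mem_ofPred_eq, Pi.add_apply] at ha hb ⊢
    lia
  neg_mem' {a} ha := by
    simp only [Set.mem_ofPred_eq, Pi.neg_apply] at ha ⊢
    lia

lemma mem_paraExponents {l : Fin 3 → ℤ} : l ∈ paraExponents ↔ l 2 = l 0 + l 1 := Iff.rfl

variable {X : Type*}

section Topological

variable [TopologicalSpace X] {T : X ≃ₜ X} {a b c d : X}

lemma isClosed_para : IsClosed (Para T) := isClosed_closure

lemma swap_mem_para (h : (a, b, c, d) ∈ Para T) : (c, d, a, b) ∈ Para T := by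
  refine map_mem_closure (f := fun q : X × X × X × X => (q.2.2.1, q.2.2.2, q.1, q.2.1))
    (by fun_prop) h ?_
  rintro _ ⟨x, m, n, rfl⟩
  refine ⟨iterZ T n x, m, -n, ?_⟩
  simp only [← iterZ_add, add_assoc, neg_add_cancel, add_zero, iterZ_zero]

lemma iterZ_face_mem_para (h : (a, b, c, d) ∈ Para T) (k : ℤ) :
    (a, b, iterZ T k c, iterZ T k d) ∈ Para T := by
  refine map_mem_closure
    (f := fun q : X × X × X × X => (q.1, q.2.1, iterZ T k q.2.2.1, iterZ T k q.2.2.2))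
    (by fun_prop) h ?_
  rintro _ ⟨x, m, n, rfl⟩
  refine ⟨x, m, k + n, ?_⟩
  simp only [← iterZ_add, add_left_comm]

lemma iterZ_diagonal_mem_para (h : (a, b, c, d) ∈ Para T) (k : ℤ) :
    (iterZ T k a, iterZ T k b, iterZ T k c, iterZ T k d) ∈ Para T :=
  swap_mem_para (iterZ_face_mem_para (swap_mem_para (iterZ_face_mem_para h k)) k)

lemma eventually_residual_mem_orbitClosure_of_mem_para [SecondCountableTopology X]
    (T : X ≃ₜ X) :
    ∀ᶠ x in residual X, ∀ a b c : X, (x, a, b, c) ∈ Para T →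
      ![a, b, c] ∈ orbitClosure T paraExponents fun _ => x := by
  let φ : paraExponents → X → Fin 3 → X := fun l x i => iterZ T (l.1 i) x
  have hφ : ∀ l, Continuous (φ l) := fun l => by fun_prop
  filter_upwards [eventually_residual_mem_closure_range hφ] with x hx a b c habc
  refine hx _ (map_mem_closure (f := fun q : X × X × X × X => (q.1, ![q.2.1, q.2.2.1, q.2.2.2]))
    (by fun_prop) habc ?_)
  rintro _ ⟨x', m, n, rfl⟩
  refine ⟨⟨![m, n, m + n], rfl⟩, ?_⟩
  funext i
  fin_cases i <;> rfl

end Topological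

variable [MetricSpace X] {T : X ≃ₜ X}

section Minimal

variable (hmin : IsMinimal T)
include hmin

lemma IsMinimal.mk_mem_para (x y : X) (n : ℤ) :
    (x, y, iterZ T n x, iterZ T n y) ∈ Para T := by
  refine map_mem_closure (f := fun y => (x, y, iterZ T n x, iterZ T n y)) (by fun_prop)
    (hmin x y) ?_
  rintro _ ⟨m, rfl⟩
  exact ⟨x, m, n, by simp only [add_comm m n, iterZ_add]⟩

lemma IsMinimal.face_mem_para {x y z : X} (h : (x, y, z, z) ∈ Para T) (w : X) :
    (x, y, w, w) ∈ Para T :=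
  isClosed_para.closure_subset <| map_mem_closure (f := fun w => (x, y, w, w)) (by fun_prop)
    (hmin z w) (Set.forall_mem_range.2 (iterZ_face_mem_para h))

variable [CompactSpace X]

lemma RP.exists_mem_para {x y : X} (h : RP T x y) : ∃ z, (x, y, z, z) ∈ Para T := by
  by_contra! hnot
  have hcompact : IsCompact (Set.range fun z : X => (x, y, z, z)) :=
    isCompact_range (by fun_prop)
  have hdisjoint : Disjoint (Set.range fun z : X => (x, y, z, z)) (Para T) :=
    Set.disjoint_left.2 (Set.forall_mem_range.2 hnot)
  obtain ⟨δ, hδ, hthick⟩ := hdisjoint.exists_thickenings hcompact isClosed_para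
  obtain ⟨x', y', n, hx, hy, hn⟩ := h δ hδ
  have hpara := hmin.mk_mem_para x' y' n
  refine Set.disjoint_left.1 hthick ?_ (Metric.self_subset_thickening hδ _ hpara)
  refine Metric.mem_thickening_iff.2 ⟨_, ⟨iterZ T n x', rfl⟩, ?_⟩
  rw [dist_comm] at hn
  simpa only [Prod.dist_eq, max_lt_iff, dist_self, hδ, true_and] using ⟨hx, hy, hn⟩

lemma RP.mem_para {x y : X} (h : RP T x y) : (x, x, x, y) ∈ Para T := by
  obtain ⟨z, hz⟩ := h.exists_mem_para hmin
  exact swap_mem_para (hmin.face_mem_para hz x)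

end Minimal

variable [CompactSpace X] {hd : IsDistal T} {u v g : Equiv.Perm X}

lemma map_mem_para_of_mem_ellisGroup {a b c d : X} (hu : u ∈ ellisGroup hd)
    (h : (a, b, c, d) ∈ Para T) : (u a, u b, u c, u d) ∈ Para T :=
  isClosed_para.closure_subset <| map_mem_closure
    (f := fun f : X → X => (f a, f b, f c, f d)) (by fun_prop)
    (coe_mem_closure_range_iterZ hu) (Set.forall_mem_range.2 (iterZ_diagonal_mem_para h))

lemma left_face_mem_envelopingGroup (hu : u ∈ ellisGroup hd) :
    ![u, 1, u] ∈ envelopingGroup hd paraExponents := by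
  convert reindex_mem_envelopingGroup ![some (), none, some ()] ?_ hu using 1
  · funext i
    fin_cases i <;> rfl
  · intro l _
    simp [mem_paraExponents]

lemma right_face_mem_envelopingGroup (hu : u ∈ ellisGroup hd) :
    ![1, u, u] ∈ envelopingGroup hd paraExponents := by
  convert reindex_mem_envelopingGroup ![none, some (), some ()] ?_ hu using 1
  · funext i
    fin_cases i <;> rfl
  · intro l _
    simp [mem_paraExponents]

lemma middle_commutator_mem_envelopingGroup (hu : u ∈ ellisGroup hd) (hv : v ∈ ellisGroup hd) :
    ![1, ⁅u, v⁆, 1] ∈ envelopingGroup hd paraExponents := by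
  have hcomm : ⁅![u, 1, u], ![1, v, v]⁆ ∈ envelopingGroup hd paraExponents :=
    commutatorElement_mem (left_face_mem_envelopingGroup hu) (right_face_mem_envelopingGroup hv)
  have hface : ![1, ⁅u, v⁆, ⁅u, v⁆] ∈ envelopingGroup hd paraExponents :=
    right_face_mem_envelopingGroup (commutatorElement_mem hu hv)
  convert mul_mem hface (inv_mem hcomm) using 1
  funext i
  fin_cases i <;> simp [commutatorElement_def]

lemma conj_mem_envelopingGroup {s : Fin 3 → Equiv.Perm X}
    (hs : s ∈ envelopingGroup hd paraExponents) (hg : g ∈ ellisGroup hd) :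
    (fun i => g * s i * g⁻¹) ∈ envelopingGroup hd paraExponents := by
  have hleft := left_face_mem_envelopingGroup hg
  -- Conjugation by the face `(g, 1, g)` fails to act on the middle vertex only, where the
  -- commutator `⁅g, s 1⁆` makes up the difference.
  convert mul_mem (middle_commutator_mem_envelopingGroup hg (apply_mem_ellisGroup hs 1))
    (mul_mem (mul_mem hleft hs) (inv_mem hleft)) using 1
  funext i
  fin_cases i <;> simp [commutatorElement_def]

theorem mem_orbitClosure_of_mem_para (hd : IsDistal T) (hmin : IsMinimal T) {x a b c : X}
    (h : (x, a, b, c) ∈ Para T) : ![a, b, c] ∈ orbitClosure T paraExponents fun _ => x := by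
  have : Nonempty X := ⟨x⟩
  obtain ⟨x', hx'⟩ :=
    (dense_of_mem_residual (eventually_residual_mem_orbitClosure_of_mem_para T)).nonempty
  obtain ⟨u, hu, rfl⟩ := exists_mem_ellisGroup_apply_eq hd hmin x x'
  obtain ⟨s, hs, hsx⟩ :=
    (mem_orbitClosure_iff hd).1 (hx' _ _ _ (map_mem_para_of_mem_ellisGroup hu h))
  refine (mem_orbitClosure_iff hd).2 ⟨_, conj_mem_envelopingGroup hs (inv_mem hu), fun i => ?_⟩
  rw [inv_inv, Equiv.Perm.mul_apply, Equiv.Perm.mul_apply, hsx, Equiv.Perm.inv_eq_iff_eq]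
  fin_cases i <;> rfl

end Parallelograms

section Parallelepipeds

/-- The vectors `(m, n, m + n, p, p + m, p + n)`: the exponents of the points whose closure is
the set `K`. -/
def pipExponents : AddSubgroup (Fin 6 → ℤ) where
  carrier := {l | l 2 = l 0 + l 1 ∧ l 4 = l 3 + l 0 ∧ l 5 = l 3 + l 1}
  zero_mem' := ⟨rfl, rfl, rfl⟩
  add_mem' {a b} ha hb := by
    simp only [Set.mem_ofPred_eq, Pi.add_apply] at ha hb ⊢
    lia
  neg_mem' {a} ha := by
    simp only [Set.mem_ofPred_eq, Pi.neg_apply] at ha ⊢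
    lia

lemma mem_pipExponents {l : Fin 6 → ℤ} :
    l ∈ pipExponents ↔ l 2 = l 0 + l 1 ∧ l 4 = l 3 + l 0 ∧ l 5 = l 3 + l 1 := Iff.rfl

variable {X : Type*}

lemma mem_closure_iff_mem_orbitClosure_pipExponents [TopologicalSpace X] (T : X ≃ₜ X)
    (x0 x1 x2 x3 x4 x5 x6 : X) :
    (x1, x2, x3, x4, x5, x6) ∈ closure {q : X × X × X × X × X × X |
      ∃ m n p : ℤ, q = (iterZ T m x0, iterZ T n x0, iterZ T (m + n) x0,
        iterZ T p x0, iterZ T (p + m) x0, iterZ T (p + n) x0)} ↔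
    ![x1, x2, x3, x4, x5, x6] ∈ orbitClosure T pipExponents fun _ => x0 := by
  constructor <;> intro h
  · refine map_mem_closure (f := fun q : X × X × X × X × X × X =>
      ![q.1, q.2.1, q.2.2.1, q.2.2.2.1, q.2.2.2.2.1, q.2.2.2.2.2]) (by fun_prop) h ?_
    rintro _ ⟨m, n, p, rfl⟩
    refine ⟨⟨![m, n, m + n, p, p + m, p + n], rfl, rfl, rfl⟩, ?_⟩
    funext i
    fin_cases i <;> rfl
  · refine map_mem_closure (f := fun w : Fin 6 → X => (w 0, w 1, w 2, w 3, w 4, w 5))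
      (by fun_prop) h ?_
    rintro _ ⟨⟨l, h2, h4, h5⟩, rfl⟩
    exact ⟨l 0, l 1, l 3, by simp only [h2, h4, h5]⟩

lemma para_mem_envelopingGroup_pipExponents [MetricSpace X] [CompactSpace X] {T : X ≃ₜ X}
    {hd : IsDistal T} {s : Fin 3 → Equiv.Perm X} (hs : s ∈ envelopingGroup hd paraExponents) :
    ![1, s 0, s 0, s 1, s 1, s 2] ∈ envelopingGroup hd pipExponents := by
  convert reindex_mem_envelopingGroup ![none, some 0, some 0, some 1, some 1, some 2] ?_ hs
    using 1
  · funext i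
    fin_cases i <;> rfl
  · intro l hl
    have hl2 : l 2 = l 1 + l 0 := (mem_paraExponents.1 hl).trans (add_comm _ _)
    simp [mem_pipExponents, hl2]

end Parallelepipeds

/-- Stability of the set `K ⊆ X⁶` under replacing the last coordinate by a
regionally proximal point. -/
theorem stmt15 {X : Type*} [MetricSpace X] [CompactSpace X] [Nonempty X]
    (T : X ≃ₜ X) (hdistal : IsDistal T) (hmin : IsMinimal T) (x0 : X)
    (x1 x2 x3 x4 x5 x6 x6' : X)
    (hK : (x1, x2, x3, x4, x5, x6) ∈ closure {q : X × X × X × X × X × X |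
      ∃ m n p : ℤ, q = (iterZ T m x0, iterZ T n x0, iterZ T (m + n) x0,
        iterZ T p x0, iterZ T (p + m) x0, iterZ T (p + n) x0)})
    (h6 : RP T x6 x6') :
    (x1, x2, x3, x4, x5, x6') ∈ closure {q : X × X × X × X × X × X |
      ∃ m n p : ℤ, q = (iterZ T m x0, iterZ T n x0, iterZ T (m + n) x0,
        iterZ T p x0, iterZ T (p + m) x0, iterZ T (p + n) x0)} := by
  rw [mem_closure_iff_mem_orbitClosure_pipExponents, mem_orbitClosure_iff hdistal] at hK ⊢
  obtain ⟨s, hs, hsx⟩ := hK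
  have hs5 : (s 5)⁻¹ ∈ ellisGroup hdistal := inv_mem (apply_mem_ellisGroup hs 5)
  have hs5x : (s 5)⁻¹ x6 = x0 := Equiv.Perm.inv_eq_iff_eq.2 (hsx 5).symm
  have hpara : (x0, x0, x0, (s 5)⁻¹ x6') ∈ Para T := by
    simpa only [hs5x] using map_mem_para_of_mem_ellisGroup hs5 (h6.mem_para hmin)
  obtain ⟨f, hf, hfx⟩ :=
    (mem_orbitClosure_iff hdistal).1 (mem_orbitClosure_of_mem_para hdistal hmin hpara)
  refine ⟨_, mul_mem hs (para_mem_envelopingGroup_pipExponents hf), fun i => ?_⟩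
  have hf0 : f 0 x0 = x0 := hfx 0
  have hf1 : f 1 x0 = x0 := hfx 1
  have hf2 : s 5 (f 2 x0) = x6' := Equiv.Perm.inv_eq_iff_eq.1 (hfx 2).symm |>.symm
  fin_cases i <;> simp [hf0, hf1, hf2, hsx]
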